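/- Fix integers r ≥ 3 and n ≥ 4, let G be a GOTE(r,n) tensor, w ∈ ℝⁿ a unit vector, M = G·w^{⊗(r−2)} the pure contraction, and set α² = (r−2)(r−3)/(r−1), β² = (r−2)/(r−1), θ² = 1/(r−1). Then for any pairwise distinct indices i, j, k, l ∈ {1,…,n}: Var(M_{ii}) = 2θ² + 4β²w_i² + α²w_i⁴; Var(M_{ij}) = θ² + β²(w_i² + w_j²) + α²w_i²w_j²; Cov(M_{ij}, M_{kl}) = α²w_i w_j w_k w_l; Cov(M_{ii}, M_{kl}) = α²w_i²w_k w_l; Cov(M_{ii}, M_{kk}) = α²w_i²w_k²; Cov(M_{ij}, M_{il}) = β²w_j w_l + α²w_i²w_j w_l; and Cov(M_{ii}, M_{il}) = 2β²w_i w_l + α²w_i³w_l. -/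

import Mathlib

open MeasureTheory ProbabilityTheory Filter

noncomputable section

/-- The size-`r` multiset of entries of a tuple `a : Fin r → Fin n`. -/
def tupleSym {n r : ℕ} (a : Fin r → Fin n) : Sym (Fin n) r :=
  ⟨(List.ofFn a : Multiset (Fin n)), by simp⟩

/-- `#Perm(a)`: the number of tuples with the same multiset of entries as `a`. -/
def permCount {n r : ℕ} (a : Fin r → Fin n) : ℕ :=
  (Finset.univ.filter (fun b : Fin r → Fin n => tupleSym b = tupleSym a)).card

/-- The sample space for a GOTE(r,n) tensor: one standard Gaussian coordinate for each
size-`r` multiset of indices. -/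
abbrev GoteSpace (r n : ℕ) : Type := Sym (Fin n) r → ℝ

/-- The law of the coordinates of a GOTE(r,n) tensor: a product of standard Gaussians. -/
def goteMeasure (r n : ℕ) : Measure (GoteSpace r n) :=
  Measure.pi fun _ => gaussianReal 0 1

instance (r n : ℕ) : IsProbabilityMeasure (goteMeasure r n) := by
  unfold goteMeasure; infer_instance

/-- The entries of the GOTE(r,n) tensor built from the Gaussian coordinates `ω`. -/
def gote {r n : ℕ} (ω : GoteSpace r n) (a : Fin r → Fin n) : ℝ :=
  Real.sqrt ((r : ℝ) / (permCount a : ℝ)) * ω (tupleSym a)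

/-- The index tuple `(i, j, f 0, …, f (r-3))`. -/
def glue {n r : ℕ} (i j : Fin n) (f : Fin (r - 2) → Fin n) : Fin r → Fin n :=
  fun t =>
    if h0 : (t : ℕ) = 0 then i
    else if h1 : (t : ℕ) = 1 then j
    else f ⟨(t : ℕ) - 2, by have := t.isLt; omega⟩

/-- The pure contraction `G ⬝ w^{⊗(r-2)}`, an `n × n` random symmetric matrix. -/
def pureContraction {r n : ℕ} (ω : GoteSpace r n) (w : Fin n → ℝ) :
    Matrix (Fin n) (Fin n) ℝ :=
  fun i j => ∑ f : Fin (r - 2) → Fin n, gote ω (glue i j f) * ∏ k, w (f k)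

open Classical in
/-- The eigenvalues (in some order) of a matrix, defined for symmetric matrices via the
spectral theorem and as `0` otherwise. -/
def eigsOf {n : ℕ} (A : Matrix (Fin n) (Fin n) ℝ) : Fin n → ℝ :=
  if h : A.IsHermitian then h.eigenvalues else 0

/-- The largest eigenvalue `λ₁` of a symmetric matrix. -/
def lambdaMax {n : ℕ} (A : Matrix (Fin n) (Fin n) ℝ) : ℝ := ⨆ i, eigsOf A i

/-- The smallest eigenvalue `λₙ` of a symmetric matrix. -/
def lambdaMin {n : ℕ} (A : Matrix (Fin n) (Fin n) ℝ) : ℝ := ⨅ i, eigsOf A i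

/-- The semicircle distribution with variance `σ²` (parameter `s = σ²`). -/
def semicircle (s : ℝ) : Measure ℝ :=
  volume.withDensity fun x => ENNReal.ofReal (Real.sqrt (4 * s - x ^ 2) / (2 * Real.pi * s))

end

/-- The covariance `Cov(X,Y) = E[(X − EX)(Y − EY)]` of two real random variables. -/
noncomputable def covar {Ω : Type*} [MeasurableSpace Ω] (μ : Measure Ω) (X Y : Ω → ℝ) : ℝ :=
  ∫ ω, (X ω - ∫ ω', X ω' ∂μ) * (Y ω - ∫ ω', Y ω' ∂μ) ∂μ

/-- The variance `Var(X) = E[(X − EX)²]` of a real random variable. -/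
noncomputable def var {Ω : Type*} [MeasurableSpace Ω] (μ : Measure Ω) (X : Ω → ℝ) : ℝ :=
  covar μ X X

/-!
Orbit–stabilizer for `S_r` acting on index tuples turns the normalisation `r / #Perm(a)` into
`Cov(G_a, G_b) = (r / r!) · #{σ | a ∘ σ = b}`, and summing this against `u₁ ⊗ ⋯ ⊗ u_r` and
`v₁ ⊗ ⋯ ⊗ v_r` gives `r / r!` times the permanent of the Gram matrix `⟨u_s, v_t⟩`. The entry `M_ij`
is the contraction of `G` against `e_i ⊗ e_j ⊗ w ⊗ ⋯ ⊗ w`, so for `M_ij` and `M_kl` the Gram matrix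
is all ones outside its first two rows and columns. Its permanent is `(r - 2)!` times a sum over the
columns chosen in the first two rows, and every covariance is read off from that sum.
-/

section Permanent

open Equiv Finset Matrix
open scoped Nat

variable {R : Type*}

@[to_additive]
lemma prod_perm_apply_succ [CommMonoid R] {m : ℕ} (σ : Perm (Fin (m + 1)))
    (z : Fin (m + 1) → R) : ∏ s : Fin m, z (σ s.succ) = ∏ t ∈ {σ 0}ᶜ, z t := by
  rw [← Finset.prod_equiv σ (s := {0}ᶜ) (by simp) (fun _ _ ↦ rfl), ← Fin.image_succ_univ,
    prod_image (Fin.succ_injective m).injOn]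

lemma prod_perm_apply_succ_succ [CommMonoid R] {m : ℕ} (σ : Perm (Fin (m + 2)))
    (z : Fin (m + 2) → R) : ∏ s : Fin m, z (σ s.succ.succ) = ∏ t ∈ {σ 0, σ 1}ᶜ, z t := by
  have compl_eq_image : ({0, 1}ᶜ : Finset (Fin (m + 2))) = univ.image (Fin.succ ∘ Fin.succ) := by
    ext t
    refine Fin.cases ?_ (Fin.cases ?_ fun _ ↦ ?_) t <;> simp [Fin.succ_succ_ne_one]
  rw [← Finset.prod_equiv σ (s := {0, 1}ᶜ) (by simp) (fun _ _ ↦ rfl), compl_eq_image,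
    prod_image ((Fin.succ_injective _).comp (Fin.succ_injective _)).injOn]
  rfl

lemma sum_perm_apply_zero [AddCommMonoid R] {m : ℕ} (F : Fin (m + 1) → R) :
    ∑ σ : Perm (Fin (m + 1)), F (σ 0) = m ! • ∑ p, F p := by
  rw [← Perm.decomposeFin.symm.sum_comp, Fintype.sum_prod_type, smul_sum]
  simp only [Perm.decomposeFin_symm_apply_zero, sum_const, card_univ, Fintype.card_perm,
    Fintype.card_fin]

lemma sum_perm_apply_zero_one [AddCommMonoid R] {m : ℕ} (F : Fin (m + 2) → Fin (m + 2) → R) :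
    ∑ σ : Perm (Fin (m + 2)), F (σ 0) (σ 1) = m ! • ∑ p, ∑ q ∈ {p}ᶜ, F p q := by
  rw [← Perm.decomposeFin.symm.sum_comp, Fintype.sum_prod_type, smul_sum]
  refine sum_congr rfl fun p _ ↦ ?_
  simp only [Perm.decomposeFin_symm_apply_zero, Perm.decomposeFin_symm_apply_one]
  rw [sum_perm_apply_zero fun q ↦ F p (swap 0 p q.succ), sum_perm_apply_succ, swap_apply_left]

lemma permanent_vecCons_vecCons_const [CommSemiring R] {m : ℕ} (x y z : Fin (m + 2) → R) :
    (of (vecCons x (vecCons y fun _ : Fin m ↦ z))).permanent =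
      m ! * ∑ p, ∑ q ∈ {p}ᶜ, x p * y q * ∏ t ∈ {p, q}ᶜ, z t := by
  rw [← permanent_transpose, permanent, ← nsmul_eq_mul, ← sum_perm_apply_zero_one]
  refine sum_congr rfl fun σ _ ↦ ?_
  rw [Fin.prod_univ_succ, Fin.prod_univ_succ, ← prod_perm_apply_succ_succ σ z, mul_assoc]
  rfl

lemma prod_compl_vecCons_vecCons_one [CommMonoid R] {m : ℕ} (z₀ z₁ : R) (p q : Fin (m + 2)) :
    ∏ t ∈ {p, q}ᶜ, vecCons z₀ (vecCons z₁ fun _ : Fin m ↦ 1) t =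
      (if 0 = p ∨ 0 = q then 1 else z₀) * (if 1 = p ∨ 1 = q then 1 else z₁) := by
  rw [← Fintype.prod_ite_mem, Fin.prod_univ_succ, Fin.prod_univ_succ]
  simp only [mem_compl, ite_not, mem_insert, mem_singleton, cons_val_zero, cons_val_succ, ite_self,
    prod_const_one, mul_one, Fin.succ_zero_eq_one, cons_val_one]

lemma permanent_vecCons_vecCons_one [CommRing R] {m : ℕ} (x₀ x₁ x y₀ y₁ y z₀ z₁ : R) :
    (of (vecCons (vecCons x₀ (vecCons x₁ fun _ ↦ x))
      (vecCons (vecCons y₀ (vecCons y₁ fun _ ↦ y))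
        fun _ : Fin m ↦ vecCons z₀ (vecCons z₁ fun _ : Fin m ↦ 1)))).permanent =
      m ! * (x₀ * y₁ + x₁ * y₀ + m * (x₀ * y * z₁ + x₁ * y * z₀ + x * y₀ * z₁ + x * y₁ * z₀) +
        m * (m - 1) * (x * y * z₀ * z₁)) := by
  have sum_compl_singleton (p : Fin (m + 2)) (F : Fin (m + 2) → R) :
      ∑ q ∈ {p}ᶜ, F q = ∑ q, F q - F p := by
    rw [eq_sub_iff_add_eq, ← sum_singleton F p, sum_compl_add_sum]
  rw [permanent_vecCons_vecCons_const]
  simp only [prod_compl_vecCons_vecCons_one, sum_compl_singleton]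
  simp only [Fin.sum_univ_succ, one_ne_zero, or_false, or_true, ↓reduceIte, cons_val_zero,
    (Fin.succ_ne_zero _).symm, cons_val_succ, Fin.succ_zero_eq_one, (Fin.succ_succ_ne_one _).symm,
    sum_const, card_univ, Fintype.card_fin, nsmul_eq_mul, or_self, sum_sub_distrib]
  ring

lemma permanent_mul [CommSemiring R] {α β : Type*} [Fintype α] [DecidableEq α] [Fintype β]
    (A : Matrix α β R) (B : Matrix β α R) :
    (A * B).permanent = ∑ σ : Perm α, ∑ a : α → β, (∏ t, A t (a t)) * ∏ t, B (a (σ t)) t := by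
  refine sum_congr rfl fun σ _ ↦ ?_
  simp only [mul_apply, Fintype.prod_sum, prod_mul_distrib]
  rw [← (σ.arrowCongr (.refl β)).symm.sum_comp]
  refine sum_congr rfl fun a _ ↦ ?_
  rw [← Equiv.prod_comp σ fun t ↦ A t (a t)]
  rfl

end Permanent

section PermCount

open Equiv Finset
open scoped Nat

lemma ofFn_perm_ofFn_iff {α : Type*} [LinearOrder α] {r : ℕ} {a b : Fin r → α} :
    (List.ofFn a).Perm (List.ofFn b) ↔ ∃ σ : Perm (Fin r), b ∘ σ = a := by
  constructor
  · intro h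
    have sorted_eq : a ∘ Tuple.sort a = b ∘ Tuple.sort b := List.ofFn_injective <|
      (((Tuple.sort a).ofFn_comp_perm a).trans
        (h.trans ((Tuple.sort b).ofFn_comp_perm b).symm)).eq_of_pairwise'
        (Tuple.monotone_sort a).sortedLE_ofFn.pairwise
        (Tuple.monotone_sort b).sortedLE_ofFn.pairwise
    refine ⟨(Tuple.sort a).symm.trans (Tuple.sort b), ?_⟩
    rw [coe_trans, ← Function.comp_assoc, ← sorted_eq, Function.comp_assoc, self_comp_symm,
      Function.comp_id]
  · rintro ⟨σ, rfl⟩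
    exact σ.ofFn_comp_perm b

variable {n r : ℕ} {a b : Fin r → Fin n}

lemma tupleSym_eq_tupleSym_iff : tupleSym a = tupleSym b ↔ ∃ σ : Perm (Fin r), b ∘ σ = a := by
  rw [← ofFn_perm_ofFn_iff, ← Multiset.coe_eq_coe]
  exact Subtype.ext_iff

lemma tupleSym_comp_perm (a : Fin r → Fin n) (σ : Perm (Fin r)) : tupleSym (a ∘ σ) = tupleSym a :=
  tupleSym_eq_tupleSym_iff.2 ⟨σ, rfl⟩

lemma permCount_congr (h : tupleSym a = tupleSym b) : permCount a = permCount b := by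
  rw [permCount, permCount, h]

lemma card_perm_comp_eq (h : tupleSym b = tupleSym a) :
    #{σ : Perm (Fin r) | a ∘ σ = b} = #{σ : Perm (Fin r) | a ∘ σ = a} := by
  obtain ⟨τ, rfl⟩ := tupleSym_eq_tupleSym_iff.1 h
  refine card_equiv (Equiv.mulRight τ⁻¹) fun σ ↦ ?_
  simp only [mem_filter_univ, coe_mulRight, Perm.coe_mul, Perm.inv_def, ← Function.comp_assoc,
    comp_symm_eq]

lemma permCount_mul_card_perm_comp_eq (h : tupleSym a = tupleSym b) :
    permCount a * #{σ : Perm (Fin r) | a ∘ σ = b} = r ! := by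
  calc permCount a * #{σ : Perm (Fin r) | a ∘ σ = b}
      = ∑ c : Fin r → Fin n with tupleSym c = tupleSym a, #{σ : Perm (Fin r) | a ∘ σ = c} := by
        refine (sum_const_nat fun c hc ↦ ?_).symm
        rw [card_perm_comp_eq (mem_filter.1 hc).2, card_perm_comp_eq h.symm]
    _ = #(univ : Finset (Perm (Fin r))) :=
        (card_eq_sum_card_fiberwise fun σ _ ↦ by simp [tupleSym_comp_perm]).symm
    _ = r ! := by rw [card_univ, Fintype.card_perm, Fintype.card_fin]

end PermCount

section Covariance

open Equiv Finset Matrix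
open scoped Nat

lemma covariance_eval_pi {ι : Type*} [Fintype ι] [DecidableEq ι] {μ : ι → Measure ℝ}
    [∀ i, IsProbabilityMeasure (μ i)] (hμ : ∀ i, MemLp id 2 (μ i)) (s t : ι) :
    cov[fun ω ↦ ω s, fun ω ↦ ω t; Measure.pi μ] = if s = t then Var[id; μ s] else 0 := by
  split_ifs with hst
  · subst hst
    rw [covariance_self (measurable_pi_apply s).aemeasurable,
      ← (measurePreserving_eval μ s).map_eq,
      variance_map aemeasurable_id (measurable_pi_apply s).aemeasurable]
    rfl
  · have memLp_eval (i : ι) : MemLp (fun ω ↦ ω i) 2 (Measure.pi μ) :=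
      (hμ i).comp_measurePreserving (measurePreserving_eval μ i)
    exact ((iIndepFun_pi (X := fun _ ↦ id) fun _ ↦ aemeasurable_id).indepFun hst).covariance_eq_zero
      (memLp_eval s) (memLp_eval t)

variable {n r : ℕ}

lemma memLp_gote (a : Fin r → Fin n) :
    MemLp (fun ω ↦ gote ω a) 2 (goteMeasure r n) :=
  have memLp_coord : MemLp (fun ω ↦ ω (tupleSym a)) 2 (goteMeasure r n) :=
    (memLp_id_gaussianReal 2).comp_measurePreserving (measurePreserving_eval _ (tupleSym a))
  memLp_coord.const_mul _

lemma covariance_gote (a b : Fin r → Fin n) :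
    cov[fun ω ↦ gote ω a, fun ω ↦ gote ω b; goteMeasure r n] =
      r / r ! * #{σ : Perm (Fin r) | a ∘ σ = b} := by
  simp only [gote, covariance_const_mul_left, covariance_const_mul_right, goteMeasure]
  rw [covariance_eval_pi fun _ ↦ memLp_id_gaussianReal 2, variance_id_gaussianReal]
  split_ifs with h
  · have card_mul : (permCount a : ℝ) * #{σ : Perm (Fin r) | a ∘ σ = b} = r ! :=
      mod_cast permCount_mul_card_perm_comp_eq h
    have card_ne_zero := right_ne_zero_of_mul (card_mul.trans_ne (mod_cast r.factorial_ne_zero))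
    rw [← permCount_congr h, NNReal.coe_one, mul_one, Real.mul_self_sqrt (by positivity),
      ← card_mul, div_mul_eq_mul_div, mul_div_mul_right _ _ card_ne_zero]
  · have no_perm (σ : Perm (Fin r)) : a ∘ σ ≠ b :=
      fun hσ ↦ h (hσ ▸ (tupleSym_comp_perm a σ).symm)
    simp [no_perm]

/-- The contraction `⟨G, u₁ ⊗ ⋯ ⊗ u_r⟩` of the whole tensor against a pure tensor; the vectors
`u₁, …, u_r` are the rows of `U`. -/
noncomputable def goteContraction (ω : GoteSpace r n) (U : Matrix (Fin r) (Fin n) ℝ) : ℝ :=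
  ∑ a, gote ω a * ∏ t, U t (a t)

theorem covariance_goteContraction (U V : Matrix (Fin r) (Fin n) ℝ) :
    cov[fun ω ↦ goteContraction ω U, fun ω ↦ goteContraction ω V; goteMeasure r n] =
      r / r ! * (U * Vᵀ).permanent := by
  simp only [goteContraction]
  rw [covariance_fun_sum_fun_sum (fun a ↦ (memLp_gote a).mul_const _)
    fun b ↦ (memLp_gote b).mul_const _]
  simp only [covariance_mul_const_left, covariance_mul_const_right, covariance_gote]
  calc ∑ a : Fin r → Fin n, ∑ b : Fin r → Fin n,
        (r / r ! * (#{σ : Perm (Fin r) | a ∘ σ = b} : ℝ) * ∏ t, U t (a t)) *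
          ∏ t, V t (b t)
      = r / r ! * ∑ a : Fin r → Fin n, ∑ b : Fin r → Fin n, ∑ σ : Perm (Fin r),
          if a ∘ σ = b then (∏ t, U t (a t)) * ∏ t, V t (b t) else 0 := by
        simp only [mul_sum, ← sum_filter, sum_const, nsmul_eq_mul]
        exact sum_congr rfl fun a _ ↦ sum_congr rfl fun b _ ↦ by ring
    _ = r / r ! * ∑ a : Fin r → Fin n, ∑ σ : Perm (Fin r),
          (∏ t, U t (a t)) * ∏ t, V t (a (σ t)) := by
        congr! 2 with a
        rw [sum_comm]
        simp
    _ = r / r ! * (U * Vᵀ).permanent := by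
        rw [sum_comm, permanent_mul]
        rfl

end Covariance

section PureContraction

open Matrix
open scoped Nat

variable {m n : ℕ}

/-- The matrix with rows `e_i, e_j, w, …, w`: contracting `G` against the tensor product of these
rows gives the `(i, j)` entry of `G ⬝ w^{⊗ m}`. -/
def contractionRows (w : Fin n → ℝ) (i j : Fin n) : Matrix (Fin (m + 2)) (Fin n) ℝ :=
  of (vecCons (Pi.single i 1) (vecCons (Pi.single j 1) fun _ ↦ w))

lemma glue_eq_vecCons (i j : Fin n) (f : Fin m → Fin n) :
    glue (r := m + 2) i j f = vecCons i (vecCons j f) := by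
  funext t
  induction t using Fin.cases with
  | zero => rfl
  | succ t => induction t using Fin.cases <;> simp [glue]

lemma sum_vecCons {α R : Type*} [Fintype α] [AddCommMonoid R] (F : (Fin (m + 1) → α) → R) :
    ∑ a, F a = ∑ x, ∑ f, F (vecCons x f) := by
  rw [← (Fin.consEquiv fun _ ↦ α).sum_comp, Fintype.sum_prod_type]
  rfl

lemma pureContraction_eq_goteContraction (ω : GoteSpace (m + 2) n) (w : Fin n → ℝ) (i j : Fin n) :
    pureContraction ω w i j = goteContraction ω (contractionRows w i j) := by
  symm
  calc goteContraction ω (contractionRows w i j)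
      = ∑ p, ∑ q, ∑ f : Fin m → Fin n, gote ω (vecCons p (vecCons q f)) *
          ((if p = i then 1 else 0) * ((if q = j then 1 else 0) * ∏ t, w (f t))) := by
        simp only [goteContraction, sum_vecCons, Fin.prod_univ_succ, contractionRows, of_apply,
          cons_val_zero, cons_val_succ, Pi.single_apply]
        rfl
    _ = ∑ f : Fin m → Fin n, gote ω (vecCons i (vecCons j f)) * ∏ t, w (f t) := by
        rw [Finset.sum_eq_single i, Finset.sum_eq_single j] <;> simp +contextual
    _ = pureContraction ω w i j := by simp only [pureContraction, glue_eq_vecCons]; rfl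

local notation "δ" => (1 : Matrix (Fin _) (Fin _) ℝ)

lemma contractionRows_mul_transpose {w : Fin n → ℝ} (hw : ∑ i, w i ^ 2 = 1) (i j k l : Fin n) :
    (contractionRows w i j * (contractionRows w k l)ᵀ : Matrix (Fin (m + 2)) (Fin (m + 2)) ℝ) =
      of (vecCons (vecCons (δ i k) (vecCons (δ i l) fun _ ↦ w i))
        (vecCons (vecCons (δ j k) (vecCons (δ j l) fun _ ↦ w j))
          fun _ ↦ vecCons (w k) (vecCons (w l) fun _ ↦ 1))) := by
  ext s t
  refine Fin.cases ?_ (Fin.cases ?_ fun _ ↦ ?_) s <;>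
    refine Fin.cases ?_ (Fin.cases ?_ fun _ ↦ ?_) t <;>
    simp [contractionRows, mul_apply, Pi.single_apply, one_apply, eq_comm, ← pow_two, hw]

theorem covar_pureContraction {r : ℕ} (hr : 2 ≤ r) {w : Fin n → ℝ} (hw : ∑ i, w i ^ 2 = 1)
    (i j k l : Fin n) :
    covar (goteMeasure r n) (fun ω ↦ pureContraction ω w i j) (fun ω ↦ pureContraction ω w k l) =
      1 / ((r : ℝ) - 1) * (δ i k * δ j l + δ i l * δ j k) +
      ((r : ℝ) - 2) / ((r : ℝ) - 1) *
        (δ i k * w j * w l + δ i l * w j * w k + δ j k * w i * w l + δ j l * w i * w k) +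
      ((r : ℝ) - 2) * ((r : ℝ) - 3) / ((r : ℝ) - 1) * (w i * w j * w k * w l) := by
  obtain ⟨m, rfl⟩ := Nat.exists_eq_add_of_le' hr
  simp only [pureContraction_eq_goteContraction]
  change cov[_, _; _] = _
  rw [covariance_goteContraction, contractionRows_mul_transpose hw, permanent_vecCons_vecCons_one,
    Nat.factorial_succ, Nat.factorial_succ]
  have factorial_ne_zero : (m ! : ℝ) ≠ 0 := mod_cast m.factorial_ne_zero
  have : (m + 2 : ℝ) - 1 ≠ 0 := by linarith [m.cast_nonneg (α := ℝ)]
  push_cast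
  field_simp
  ring

end PureContraction

/-- **The covariance structure of a pure contraction** `M = G·w^{⊗(r−2)}` of a GOTE(r,n)
tensor, for pairwise distinct indices `i, j, k, l` and `α² = (r−2)(r−3)/(r−1)`,
`β² = (r−2)/(r−1)`, `θ² = 1/(r−1)`. -/
theorem cov_structure_pure_contraction
    (r n : ℕ) (hr : 3 ≤ r) (hn : 4 ≤ n)
    (w : Fin n → ℝ) (hw : ∑ i, w i ^ 2 = 1)
    (i j k l : Fin n)
    (hij : i ≠ j) (hik : i ≠ k) (hil : i ≠ l) (hjk : j ≠ k) (hjl : j ≠ l) (hkl : k ≠ l) :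
    var (goteMeasure r n) (fun ω => pureContraction ω w i i)
        = 2 * (1 / ((r : ℝ) - 1)) + 4 * (((r : ℝ) - 2) / ((r : ℝ) - 1)) * w i ^ 2
          + ((r : ℝ) - 2) * ((r : ℝ) - 3) / ((r : ℝ) - 1) * w i ^ 4
    ∧ var (goteMeasure r n) (fun ω => pureContraction ω w i j)
        = 1 / ((r : ℝ) - 1) + (((r : ℝ) - 2) / ((r : ℝ) - 1)) * (w i ^ 2 + w j ^ 2)
          + ((r : ℝ) - 2) * ((r : ℝ) - 3) / ((r : ℝ) - 1) * (w i ^ 2 * w j ^ 2)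
    ∧ covar (goteMeasure r n) (fun ω => pureContraction ω w i j)
        (fun ω => pureContraction ω w k l)
        = ((r : ℝ) - 2) * ((r : ℝ) - 3) / ((r : ℝ) - 1) * (w i * w j * w k * w l)
    ∧ covar (goteMeasure r n) (fun ω => pureContraction ω w i i)
        (fun ω => pureContraction ω w k l)
        = ((r : ℝ) - 2) * ((r : ℝ) - 3) / ((r : ℝ) - 1) * (w i ^ 2 * w k * w l)
    ∧ covar (goteMeasure r n) (fun ω => pureContraction ω w i i)
        (fun ω => pureContraction ω w k k)
        = ((r : ℝ) - 2) * ((r : ℝ) - 3) / ((r : ℝ) - 1) * (w i ^ 2 * w k ^ 2)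
    ∧ covar (goteMeasure r n) (fun ω => pureContraction ω w i j)
        (fun ω => pureContraction ω w i l)
        = (((r : ℝ) - 2) / ((r : ℝ) - 1)) * (w j * w l)
          + ((r : ℝ) - 2) * ((r : ℝ) - 3) / ((r : ℝ) - 1) * (w i ^ 2 * w j * w l)
    ∧ covar (goteMeasure r n) (fun ω => pureContraction ω w i i)
        (fun ω => pureContraction ω w i l)
        = 2 * (((r : ℝ) - 2) / ((r : ℝ) - 1)) * (w i * w l)
          + ((r : ℝ) - 2) * ((r : ℝ) - 3) / ((r : ℝ) - 1) * (w i ^ 3 * w l) := by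
  simp only [var, covar_pureContraction (by lia : 2 ≤ r) hw, Matrix.one_apply_eq,
    Matrix.one_apply_ne hij, Matrix.one_apply_ne hij.symm, Matrix.one_apply_ne hik,
    Matrix.one_apply_ne hil, Matrix.one_apply_ne hjk, Matrix.one_apply_ne hjl]
  refine ⟨?_, ?_, ?_, ?_, ?_, ?_, ?_⟩ <;> ring
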